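/- (Martingale Lemma 2.) Let $B \in \mathbb{N}$, $\theta \in (0,1]$, $a \ge 0$, $l \ge 1$, $\mu \in (0,1)$, $\eta \ge 0$, and put $b_k := (k+a)^{-\theta}$ (only indices $k \ge 1$ are used below). For a real sequence $(v_k)_{k \ge 0}$ and $k \in \mathbb{N}$ let $\max_{k-B \le \hat k \le k} v_{\hat k}$ be the maximum of $v$ over the integers $\hat k$ with $\max(k-B,0) \le \hat k \le k$. Let $(v_k)$ be a sequence of nonnegative reals, let $a_1 \ge 0$ with $a_1 \le 1-\mu$, let $(a_{2,k})$ be a nonincreasing sequence of nonnegative reals with $a_1 + a_{2,k} \le 1$ for every $k$, and let $(a_{3,k})$ be nonnegative reals with $a_{3,k} \le \frac{b_{k+1}}{l}\,\eta$ for every $k$. Let $k^* \in \mathbb{N}$ and suppose $$v_{k+1} \le a_1 v_k + a_{2,k} \max_{k-B \le \hat k \le k} v_{\hat k} + a_{3,k} \qquad \text{for all } k \ge k^*.$$ Let $\bar k \in \mathbb{N}$ satisfy $\bar k \ge k^*$, $\bar k \ge B$, $0 < a_1 + a_{2,\bar k}$ and $a_{2,\bar k} \le \frac{1-\frac1l}{(B+2)^{\theta}}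 + \mu - 1$. Set $\rho := (a_1 + a_{2,\bar k})^{1/(B+1)}$, and let $V_0$ be any real number with $V_0 \ge \rho^{-\bar k} \max_{\bar k - B \le j \le \bar k} v_j$ (for example $V_0 = \rho^{-(\bar k + B)} \max_{\bar k - B \le j \le \bar k} v_j$). Then $$v_{\bar k + m} \le \rho^{\bar k + B + 1} V_0 + b_{\bar k + m}\,\eta \qquad \text{for every } 1 \le m \le B+1,$$ and $$v_k \le \rho^{k} V_0 + b_k\,\eta \qquad \text{for every } k \ge \bar k + B + 1.$$ -/

import Mathlib

/-- The maximum of a real sequence over the delay window `max (k - B) 0 ≤ j ≤ k`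
(natural-number subtraction truncates at `0`). -/
noncomputable def windowMax (B : ℕ) (v : ℕ → ℝ) (k : ℕ) : ℝ :=
  (Finset.Icc (k - B) k).sup' (Finset.nonempty_Icc.mpr (Nat.sub_le k B)) v

/-!
If the window maximum on the right of `v (k + 1) ≤ c · max_{k-B ≤ j ≤ k} v j + d k` is attained at
`j`, then one step of the recursion moves from `j` to `k + 1 ≤ j + B + 1`. Its factor
`c = ρ ^ (B + 1)` thus pays for the decay of the envelope `V * ρ ^ k` over the whole step. On the
initial window only `v j ≤ V * ρ ^ K` is known, so the envelope stays at `V * ρ ^ (K + B + 1)` up to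
the index `K + B + 1`. The perturbations are absorbed by any sequence `e` with
`c * e j + d k ≤ e (k + 1)` on such steps; the stepsizes `e k = (k + a) ^ (-θ) * η` qualify because
they shrink by at most the factor `(B + 2) ^ θ` over `B + 1` indices.
-/

theorem le_windowMax (B : ℕ) (v : ℕ → ℝ) {j k : ℕ} (hkj : k ≤ j + B) (hjk : j ≤ k) :
    v j ≤ windowMax B v k :=
  Finset.le_sup' v (Finset.mem_Icc.mpr ⟨Nat.sub_le_iff_le_add.mpr hkj, hjk⟩)

theorem self_le_windowMax (B : ℕ) (v : ℕ → ℝ) (k : ℕ) : v k ≤ windowMax B v k :=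
  le_windowMax B v (Nat.le_add_right k B) le_rfl

theorem exists_windowMax_eq (B : ℕ) (v : ℕ → ℝ) (k : ℕ) :
    ∃ j, k ≤ j + B ∧ j ≤ k ∧ windowMax B v k = v j := by
  obtain ⟨j, hj, hmax⟩ :=
    Finset.exists_mem_eq_sup' (Finset.nonempty_Icc.mpr (Nat.sub_le k B)) v
  rw [Finset.mem_Icc] at hj
  exact ⟨j, Nat.sub_le_iff_le_add.mp hj.1, hj.2, hmax⟩

theorem le_geometric_add_of_le_windowMax {B K : ℕ} {ρ V : ℝ} {v d e : ℕ → ℝ}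
    (hρ₀ : 0 ≤ ρ) (hρ₁ : ρ ≤ 1) (hV : 0 ≤ V)
    (hrec : ∀ k, K ≤ k → v (k + 1) ≤ ρ ^ (B + 1) * windowMax B v k + d k)
    (hinit : windowMax B v K ≤ V * ρ ^ K)
    (hde : ∀ k, K ≤ k → d k ≤ e (k + 1))
    (he : ∀ j k, K < j → j ≤ k → k ≤ j + B → ρ ^ (B + 1) * e j + d k ≤ e (k + 1))
    {k : ℕ} (hk : K < k) :
    v k ≤ V * ρ ^ max k (K + B + 1) + e k := by
  induction k using Nat.strong_induction_on with
  | _ k ih =>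
    obtain ⟨k, rfl⟩ := Nat.exists_eq_add_one_of_ne_zero (Nat.ne_zero_of_lt hk)
    have hKk : K ≤ k := Nat.le_of_lt_succ hk
    obtain ⟨j, hkj, hjk, hmax⟩ := exists_windowMax_eq B v k
    have hstep : v (k + 1) ≤ ρ ^ (B + 1) * v j + d k := hmax ▸ hrec k hKk
    rcases le_or_gt j K with hjK | hKj
    · have hvj : v j ≤ V * ρ ^ K := (le_windowMax B v (by omega) hjK).trans hinit
      calc v (k + 1) ≤ ρ ^ (B + 1) * (V * ρ ^ K) + e (k + 1) := by
            grw [hstep, hvj, hde k hKk]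
        _ = V * ρ ^ max (k + 1) (K + B + 1) + e (k + 1) := by
            rw [max_eq_right (by omega)]; ring
    · have hpow : ρ ^ (B + 1 + max j (K + B + 1)) ≤ ρ ^ max (k + 1) (K + B + 1) :=
        pow_le_pow_of_le_one hρ₀ hρ₁ (by omega)
      calc v (k + 1) ≤ ρ ^ (B + 1) * (V * ρ ^ max j (K + B + 1) + e j) + d k := by
            grw [hstep, ih j (by omega) hKj]
        _ = V * ρ ^ (B + 1 + max j (K + B + 1)) + (ρ ^ (B + 1) * e j + d k) := by ring
        _ ≤ V * ρ ^ max (k + 1) (K + B + 1) + e (k + 1) := by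
            grw [hpow, he j k hKj hjk hkj]

theorem mul_rpow_neg_le_mul_rpow_neg {x y C c s θ : ℝ} (hx : 0 < x) (hy : 0 < y) (hC : 0 < C)
    (hyx : y ≤ C * x) (hθ : 0 ≤ θ) (hc : 0 ≤ c) (hcs : c ≤ s / C ^ θ) :
    c * x ^ (-θ) ≤ s * y ^ (-θ) := by
  have hxy : x ^ (-θ) ≤ C ^ θ * y ^ (-θ) :=
    calc x ^ (-θ) = C ^ θ * (C * x) ^ (-θ) := by
          rw [Real.mul_rpow hC.le hx.le, ← mul_assoc, ← Real.rpow_add hC, add_neg_cancel,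
            Real.rpow_zero, one_mul]
      _ ≤ C ^ θ * y ^ (-θ) := by
          gcongr ?_ * ?_
          exact Real.rpow_le_rpow_of_nonpos hy hyx (neg_nonpos.mpr hθ)
  calc c * x ^ (-θ) ≤ c * (C ^ θ * y ^ (-θ)) := by gcongr
    _ = c * C ^ θ * y ^ (-θ) := by ring
    _ ≤ s * y ^ (-θ) := by
        gcongr
        exact (le_div_iff₀ (by positivity)).mp hcs

theorem mul_stepsize_add_div_le {B j k : ℕ} {θ a l c : ℝ} (hθ : 0 ≤ θ) (ha : 0 ≤ a)
    (hc : 0 ≤ c) (hcl : c ≤ (1 - 1 / l) / ((B : ℝ) + 2) ^ θ) (hj : 1 ≤ j) (hkj : k ≤ j + B) :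
    c * ((j : ℝ) + a) ^ (-θ) + (((k + 1 : ℕ) : ℝ) + a) ^ (-θ) / l
      ≤ (((k + 1 : ℕ) : ℝ) + a) ^ (-θ) := by
  have hj' : (1 : ℝ) ≤ j := by exact_mod_cast hj
  have hkj' : (k : ℝ) ≤ j + B := by exact_mod_cast hkj
  have hratio : ((k + 1 : ℕ) : ℝ) + a ≤ ((B : ℝ) + 2) * (j + a) := by
    push_cast
    nlinarith [mul_nonneg B.cast_nonneg ha, mul_nonneg B.cast_nonneg (sub_nonneg.mpr hj')]
  have hshrink := mul_rpow_neg_le_mul_rpow_neg (by positivity) (by positivity) (by positivity)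
    hratio hθ hc hcl
  linear_combination hshrink

theorem le_geometric_add_stepsize {B K : ℕ} {θ a l η ρ V : ℝ} {v : ℕ → ℝ}
    (hθ : 0 ≤ θ) (ha : 0 ≤ a) (hl : 1 ≤ l) (hη : 0 ≤ η) (hρ : 0 ≤ ρ) (hV : 0 ≤ V)
    (hsmall : ρ ^ (B + 1) ≤ (1 - 1 / l) / ((B : ℝ) + 2) ^ θ)
    (hrec : ∀ k, K ≤ k →
      v (k + 1) ≤ ρ ^ (B + 1) * windowMax B v k + (((k + 1 : ℕ) : ℝ) + a) ^ (-θ) / l * η)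
    (hinit : windowMax B v K ≤ V * ρ ^ K) {k : ℕ} (hk : K < k) :
    v k ≤ V * ρ ^ max k (K + B + 1) + ((k : ℝ) + a) ^ (-θ) * η := by
  have hpow : 1 ≤ ((B : ℝ) + 2) ^ θ :=
    Real.one_le_rpow (by linarith [B.cast_nonneg (α := ℝ)]) hθ
  have hρ₁ : ρ ≤ 1 := (pow_le_one_iff_of_nonneg hρ B.succ_ne_zero).mp <|
    calc ρ ^ (B + 1) ≤ (1 - 1 / l) / ((B : ℝ) + 2) ^ θ := hsmall
      _ ≤ 1 := div_le_one_of_le₀ ((sub_le_self 1 (by positivity)).trans hpow) (by positivity)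
  refine le_geometric_add_of_le_windowMax (e := fun k : ℕ => ((k : ℝ) + a) ^ (-θ) * η)
    hρ hρ₁ hV hrec hinit (fun k _ => ?_) (fun j k hKj _ hkj => ?_) hk
  · exact mul_le_mul_of_nonneg_right (div_le_self (by positivity) hl) hη
  · have hstep := mul_stepsize_add_div_le hθ ha (pow_nonneg hρ (B + 1)) hsmall
      (Nat.one_le_of_lt hKj) hkj
    linear_combination η * hstep

theorem martingale_lemma_two_general
    {B K : ℕ} {θ a l η a₁ ρ V₀ : ℝ} {b v a₂ a₃ : ℕ → ℝ}
    (hθ : 0 ≤ θ) (ha : 0 ≤ a) (hl : 1 ≤ l) (hη : 0 ≤ η)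
    (hb : ∀ k, b k = ((k : ℝ) + a) ^ (-θ)) (hv : ∀ k, 0 ≤ v k) (ha₁ : 0 ≤ a₁)
    (ha₂ : ∀ k, K ≤ k → a₂ k ≤ a₂ K)
    (ha₃ : ∀ k, K ≤ k → a₃ k ≤ b (k + 1) / l * η)
    (hrec : ∀ k, K ≤ k → v (k + 1) ≤ a₁ * v k + a₂ k * windowMax B v k + a₃ k)
    (hpos : 0 < a₁ + a₂ K)
    (hsmall : a₁ + a₂ K ≤ (1 - 1 / l) / ((B : ℝ) + 2) ^ θ)
    (hρ : ρ = (a₁ + a₂ K) ^ ((1 : ℝ) / ((B : ℝ) + 1)))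
    (hV₀ : windowMax B v K / ρ ^ K ≤ V₀) :
    (∀ m, 1 ≤ m → m ≤ B + 1 → v (K + m) ≤ ρ ^ (K + B + 1) * V₀ + b (K + m) * η) ∧
    (∀ k, K + B + 1 ≤ k → v k ≤ ρ ^ k * V₀ + b k * η) := by
  have hρ₀ : 0 < ρ := hρ ▸ Real.rpow_pos_of_pos hpos _
  have hρpow : ρ ^ (B + 1) = a₁ + a₂ K := by
    rw [hρ, one_div, ← Nat.cast_add_one, Real.rpow_inv_natCast_pow hpos.le B.succ_ne_zero]
  have hW : ∀ k, 0 ≤ windowMax B v k := fun k => (hv k).trans (self_le_windowMax B v k)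
  have hV₀_nonneg : 0 ≤ V₀ := (div_nonneg (hW K) (by positivity)).trans hV₀
  have hcontr : ∀ k, K ≤ k →
      v (k + 1) ≤ ρ ^ (B + 1) * windowMax B v k + b (k + 1) / l * η := fun k hk =>
    calc v (k + 1) ≤ a₁ * windowMax B v k + a₂ K * windowMax B v k + b (k + 1) / l * η := by
          grw [hrec k hk, ha₃ k hk]
          gcongr
          exacts [self_le_windowMax B v k, hW k, ha₂ k hk]
      _ = ρ ^ (B + 1) * windowMax B v k + b (k + 1) / l * η := by rw [hρpow, add_mul]
  have hbound : ∀ k, K < k → v k ≤ V₀ * ρ ^ max k (K + B + 1) + b k * η := fun k hk => by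
    simp only [hb] at hcontr ⊢
    exact le_geometric_add_stepsize hθ ha hl hη hρ₀.le hV₀_nonneg (hρpow ▸ hsmall) hcontr
      ((div_le_iff₀ (by positivity)).mp hV₀) hk
  refine ⟨fun m hm₁ hm₂ => ?_, fun k hk => ?_⟩
  · simpa only [max_eq_right (show K + m ≤ K + B + 1 by omega), mul_comm V₀]
      using hbound (K + m) (by omega)
  · simpa only [max_eq_left hk, mul_comm V₀] using hbound k (by omega)

/-- A nonnegative sequence satisfying the perturbed delayed contraction
`v (k+1) ≤ a₁ v k + a₂ k · max_{k-B ≤ j ≤ k} v j + a₃ k`, with perturbations dominated by the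
diminishing stepsizes `b k = (k+a)^(-θ)`, decays geometrically up to a vanishing term
proportional to the stepsize. -/
theorem martingale_lemma_two
    (B : ℕ) (θ a l μ η : ℝ)
    (hθ₀ : 0 < θ) (hθ₁ : θ ≤ 1) (ha : 0 ≤ a) (hl : 1 ≤ l)
    (hμ₀ : 0 < μ) (hμ₁ : μ < 1) (hη : 0 ≤ η)
    (b : ℕ → ℝ) (hb : ∀ k, b k = ((k : ℝ) + a) ^ (-θ))
    (v : ℕ → ℝ) (hv : ∀ k, 0 ≤ v k)
    (a₁ : ℝ) (ha₁ : 0 ≤ a₁) (ha₁μ : a₁ ≤ 1 - μ)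
    (a₂ : ℕ → ℝ) (ha₂ : ∀ k, 0 ≤ a₂ k) (ha₂anti : Antitone a₂)
    (hsum : ∀ k, a₁ + a₂ k ≤ 1)
    (a₃ : ℕ → ℝ) (ha₃ : ∀ k, 0 ≤ a₃ k) (ha₃b : ∀ k, a₃ k ≤ b (k + 1) / l * η)
    (kstar : ℕ)
    (hrec : ∀ k, kstar ≤ k → v (k + 1) ≤ a₁ * v k + a₂ k * windowMax B v k + a₃ k)
    (kbar : ℕ) (hkbar₁ : kstar ≤ kbar) (hkbar₂ : B ≤ kbar)
    (hpos : 0 < a₁ + a₂ kbar)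
    (ha₂kbar : a₂ kbar ≤ (1 - 1 / l) / ((B : ℝ) + 2) ^ θ + μ - 1)
    (ρ : ℝ) (hρ : ρ = (a₁ + a₂ kbar) ^ ((1 : ℝ) / ((B : ℝ) + 1)))
    (V₀ : ℝ) (hV₀ : windowMax B v kbar / ρ ^ kbar ≤ V₀) :
    (∀ m, 1 ≤ m → m ≤ B + 1 →
      v (kbar + m) ≤ ρ ^ (kbar + B + 1) * V₀ + b (kbar + m) * η) ∧
    (∀ k, kbar + B + 1 ≤ k → v k ≤ ρ ^ k * V₀ + b k * η) :=
  martingale_lemma_two_general hθ₀.le ha hl hη hb hv ha₁ (fun _ hk => ha₂anti hk)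
    (fun k _ => ha₃b k) (fun k hk => hrec k (hkbar₁.trans hk)) hpos
    (by linarith) hρ hV₀
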